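/- Let H be a real Hilbert space, Ψ : H → ℝ ∪ {+∞} proper, lower-semicontinuous and convex, and Φ : H → ℝ convex and continuously differentiable with L-Lipschitz continuous gradient. Suppose x* ∈ argmin(Ψ + Φ), and let (x_k) be generated by the accelerated forward-backward algorithm with parameter α ≥ 3 and step size 0 < s < 1/L. Then for every k ≥ 0, Θ(x_k) − Θ(x*) ≤ (α−1)E(0) / (2s(k+α−2)²) and ‖z_k − x*‖² ≤ E(0)/(α−1). -/

import Mathlib

open Filter RealInnerProductSpace

/-! Testing the minimality of a forward-backward step at the convex combination
`(1 - θ) • x k + θ • x*`, with `θ = (α - 1) / (k + α - 1)`, and writing `z` for the sequence with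
`y k = (1 - θ) • x k + θ • z k` and `x (k + 1) = (1 - θ) • x k + θ • z (k + 1)`, gives
`W (k + 1) + θ² / (2 s) ‖z (k + 1) - x*‖² ≤ (1 - θ) W k + θ² / (2 s) ‖z k - x*‖²`
for the value gap `W k = Θ (x k) - Θ x*`. Multiplied by `2 s (k + α - 1)² / (α - 1)` this says that
`E (k + 1) ≤ E k`, because `k (k + α - 1) ≤ (k + α - 2)²` as soon as `3 ≤ α`; both terms of `E` are
nonnegative, so each of them is bounded by `E 0`. -/

section Calculus

variable {E F : Type*} [NormedAddCommGroup E] [NormedSpace ℝ E]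
  [NormedAddCommGroup F] [NormedSpace ℝ F]

lemma norm_sub_sub_fderiv_le_of_norm_fderiv_sub_le {f : E → F} {f' : E → E →L[ℝ] F} {C : ℝ} {a : E}
    (hf : ∀ u, HasFDerivAt f (f' u) u) (hf' : ∀ u, ‖f' u - f' a‖ ≤ C * ‖u - a‖) (b : E) :
    ‖f b - f a - f' a (b - a)‖ ≤ C / 2 * ‖b - a‖ ^ 2 := by
  let ℓ : ℝ → E := AffineMap.lineMap a b
  have hg : ∀ t, HasDerivAt (fun t ↦ f (ℓ t) - f a - t • f' a (b - a))
      ((f' (ℓ t) - f' a) (b - a)) t := fun t ↦ by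
    have hfℓ := (hf (ℓ t)).comp_hasDerivAt t AffineMap.hasDerivAt_lineMap
    simpa using (hfℓ.sub_const (f a)).fun_sub ((hasDerivAt_id t).smul_const (f' a (b - a)))
  have hB : ∀ t : ℝ, HasDerivAt (fun t ↦ C / 2 * ‖b - a‖ ^ 2 * t ^ 2) (C * ‖b - a‖ ^ 2 * t) t :=
    fun t ↦ ((hasDerivAt_pow 2 t).const_mul _).congr_deriv (by norm_num; ring)
  have hbound : ∀ t ∈ Set.Ico (0 : ℝ) 1,
      ‖(f' (ℓ t) - f' a) (b - a)‖ ≤ C * ‖b - a‖ ^ 2 * t := fun t ht ↦ calc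
    _ ≤ ‖f' (ℓ t) - f' a‖ * ‖b - a‖ := ContinuousLinearMap.le_opNorm _ _
    _ ≤ C * ‖ℓ t - a‖ * ‖b - a‖ := by gcongr; exact hf' _
    _ = C * ‖b - a‖ ^ 2 * t := by
      rw [← dist_eq_norm, dist_lineMap_left, Real.norm_of_nonneg ht.1, dist_comm, dist_eq_norm]
      ring
  simpa [ℓ] using image_norm_le_of_norm_deriv_right_le_deriv_boundary
    (fun t _ ↦ (hg t).continuousAt.continuousWithinAt) (fun t _ ↦ (hg t).hasDerivWithinAt)
    (by simp [ℓ]) hB hbound (Set.right_mem_Icc.2 zero_le_one)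

lemma add_fderiv_le_of_convexOn {D : Set E} {f : E → ℝ} {f' : E →L[ℝ] ℝ} {a b : E}
    (hf : ConvexOn ℝ D f) (ha : a ∈ D) (hb : b ∈ D) (hf' : HasFDerivAt f f' a) :
    f a + f' (b - a) ≤ f b := by
  have hline : HasDerivAt (f ∘ AffineMap.lineMap a b) (f' (b - a)) (0 : ℝ) :=
    HasFDerivAt.comp_hasDerivAt 0 (by simpa using hf') AffineMap.hasDerivAt_lineMap
  have hslope := (hf.comp_affineMap (AffineMap.lineMap a b)).le_slope_of_hasDerivAt
    (x := (0 : ℝ)) (y := 1) (by simpa using ha) (by simpa using hb) zero_lt_one hline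
  simp only [slope_def_field, Function.comp_apply, AffineMap.lineMap_apply_one,
    AffineMap.lineMap_apply_zero, sub_zero, div_one] at hslope
  linarith

lemma add_le_of_isMinOn_of_uniformConvexOn {D : Set E} {φ : ℝ → ℝ} {f : E → ℝ} {p u : E}
    (hf : UniformConvexOn D φ f) (hmin : IsMinOn f D p) (hp : p ∈ D) (hu : u ∈ D) :
    f p + φ ‖p - u‖ ≤ f u := by
  have hsegment : ∀ t ∈ Set.Ioo (0 : ℝ) 1, f p + (1 - t) * φ ‖p - u‖ ≤ f u := fun t ht ↦ by
    have h1t : 0 ≤ 1 - t := by linarith [ht.2]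
    have hle := (hmin (hf.1 hp hu h1t ht.1.le (by ring))).trans
      (hf.2 hp hu h1t ht.1.le (by ring))
    simp only [smul_eq_mul] at hle
    exact le_of_mul_le_mul_left (by linarith) ht.1
  have hlim : Tendsto (fun t : ℝ ↦ f p + (1 - t) * φ ‖p - u‖) (nhdsWithin 0 (Set.Ioi 0))
      (nhds (f p + φ ‖p - u‖)) :=
    (Continuous.tendsto' (by fun_prop) _ _ (by simp)).mono_left nhdsWithin_le_nhds
  exact le_of_tendsto hlim (eventually_of_mem (Ioo_mem_nhdsGT zero_lt_one) hsegment)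

end Calculus

section ForwardBackward

variable {H : Type*} [NormedAddCommGroup H] [InnerProductSpace ℝ H]
  {D : Set H} {ψ Φ : H → ℝ} {Φ' : H → H} {L : NNReal} {s : ℝ}

lemma strongConvexOn_add_sq_norm_sub (hψ : ConvexOn ℝ D ψ) (m : ℝ) (v : H) :
    StrongConvexOn D m fun u ↦ ψ u + m / 2 * ‖u - v‖ ^ 2 := by
  refine strongConvexOn_iff_convex.2 (((hψ.add
    ((innerSL ℝ (-m • v)).toLinearMap.convexOn hψ.1)).add_const (m / 2 * ‖v‖ ^ 2)).congr
    fun u _ ↦ ?_)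
  change ψ u + ⟪-m • v, u⟫ + m / 2 * ‖v‖ ^ 2 = ψ u + m / 2 * ‖u - v‖ ^ 2 - m / 2 * ‖u‖ ^ 2
  rw [norm_sub_sq_real, real_inner_smul_left, real_inner_comm u v]
  ring

lemma add_sq_norm_sub_le_of_isMinOn_prox {c : ℝ} {p u v : H} (hψ : ConvexOn ℝ D ψ)
    (hmin : IsMinOn (fun u ↦ ψ u + c * ‖u - v‖ ^ 2) D p) (hp : p ∈ D) (hu : u ∈ D) :
    ψ p + c * ‖p - v‖ ^ 2 + c * ‖u - p‖ ^ 2 ≤ ψ u + c * ‖u - v‖ ^ 2 := by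
  have hconvex := strongConvexOn_add_sq_norm_sub hψ (2 * c) v
  rw [StrongConvexOn, mul_div_cancel_left₀ c two_ne_zero] at hconvex
  simpa only [norm_sub_rev p u] using add_le_of_isMinOn_of_uniformConvexOn hconvex hmin hp hu

lemma le_add_inner_add_sq_of_lipschitzWith (hΦ' : ∀ u, HasFDerivAt Φ (innerSL ℝ (Φ' u)) u)
    (hlip : LipschitzWith L Φ') (a b : H) :
    Φ b ≤ Φ a + ⟪Φ' a, b - a⟫ + L / 2 * ‖b - a‖ ^ 2 := by
  have hle := norm_sub_sub_fderiv_le_of_norm_fderiv_sub_le (a := a) (C := L) hΦ' (fun u ↦ by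
    rw [← map_sub, innerSL_apply_norm]
    exact hlip.norm_sub_le u a) b
  rw [innerSL_apply_apply] at hle
  linarith [(Real.le_norm_self _).trans hle]

lemma sq_norm_sub_sub_smul (hs : s ≠ 0) (w y g : H) :
    1 / (2 * s) * ‖w - (y - s • g)‖ ^ 2 =
      1 / (2 * s) * ‖w - y‖ ^ 2 + ⟪g, w - y⟫ + s / 2 * ‖g‖ ^ 2 := by
  rw [← sub_add, norm_add_sq_real, real_inner_smul_right, real_inner_comm, norm_smul, mul_pow,
    Real.norm_eq_abs, sq_abs]
  field_simp

lemma forwardBackward_add_sq_le {p u y : H} (hψ : ConvexOn ℝ D ψ)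
    (hΦ : ConvexOn ℝ Set.univ Φ) (hΦ' : ∀ u, HasFDerivAt Φ (innerSL ℝ (Φ' u)) u)
    (hlip : LipschitzWith L Φ') (hs : 0 < s) (hLs : L * s ≤ 1)
    (hmin : IsMinOn (fun u ↦ ψ u + 1 / (2 * s) * ‖u - (y - s • Φ' y)‖ ^ 2) D p)
    (hp : p ∈ D) (hu : u ∈ D) :
    ψ p + Φ p + 1 / (2 * s) * ‖u - p‖ ^ 2 ≤ ψ u + Φ u + 1 / (2 * s) * ‖u - y‖ ^ 2 := by
  have hprox := add_sq_norm_sub_le_of_isMinOn_prox hψ hmin hp hu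
  rw [sq_norm_sub_sub_smul hs.ne', sq_norm_sub_sub_smul hs.ne'] at hprox
  have hdescent := le_add_inner_add_sq_of_lipschitzWith hΦ' hlip y p
  have htangent : Φ y + ⟪Φ' y, u - y⟫ ≤ Φ u :=
    add_fderiv_le_of_convexOn hΦ (Set.mem_univ y) (Set.mem_univ u) (hΦ' y)
  have hstep : L / 2 * ‖p - y‖ ^ 2 ≤ 1 / (2 * s) * ‖p - y‖ ^ 2 := by
    gcongr ?_ * _
    rw [div_le_div_iff₀ two_pos (by positivity)]
    linarith
  linarith

end ForwardBackward

section Fista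

variable {H : Type*} [NormedAddCommGroup H] [InnerProductSpace ℝ H]
  {D : Set H} {ψ Φ : H → ℝ} {Φ' : H → H} {L : NNReal} {s α : ℝ} {x y : ℕ → H} {xstar : H}

/-- The sequences generated by the accelerated forward-backward algorithm for `ψ + Φ`, where
`Φ' = ∇Φ` and where the extended-valued function of the paper is encoded by its effective
domain `D` and its real values `ψ` there. As `0 - 1 = 0` in `ℕ`, the initial velocity is `0`. -/
structure IsFista (D : Set H) (ψ : H → ℝ) (Φ' : H → H) (s α : ℝ) (x y : ℕ → H) : Prop where
  mem (k : ℕ) : x k ∈ D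
  extrapolation (k : ℕ) : y k = x k + (((k : ℝ) - 1) / (k + α - 1)) • (x k - x (k - 1))
  isMinOn (k : ℕ) :
    IsMinOn (fun u ↦ ψ u + 1 / (2 * s) * ‖u - (y k - s • Φ' (y k))‖ ^ 2) D (x (k + 1))

/-- The auxiliary sequence `z` of the accelerated forward-backward algorithm. -/
noncomputable def fistaZ (α : ℝ) (x : ℕ → H) (k : ℕ) : H :=
  x k + (((k : ℝ) - 1) / (α - 1)) • (x k - x (k - 1))

/-- The weight `θ` for which `y k` and `x (k + 1)` are the convex combinations with weights
`1 - θ` and `θ` of `x k` and, respectively, `fistaZ α x k` and `fistaZ α x (k + 1)`. -/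
noncomputable def fistaWeight (α : ℝ) (k : ℕ) : ℝ := (α - 1) / (k + α - 1)

/-- The Lyapunov function `E` of the accelerated forward-backward algorithm, for a real-valued
objective `Θ`. -/
noncomputable def fistaEnergy (s α : ℝ) (Θ : H → ℝ) (x : ℕ → H) (xstar : H) (k : ℕ) : ℝ :=
  2 * s / (α - 1) * ((k : ℝ) + α - 2) ^ 2 * (Θ (x k) - Θ xstar) +
    (α - 1) * ‖fistaZ α x k - xstar‖ ^ 2

lemma fistaWeight_mem_Icc (hα : 1 < α) (k : ℕ) : fistaWeight α k ∈ Set.Icc 0 1 := by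
  have hden : 0 < (k : ℝ) + α - 1 := by linarith [k.cast_nonneg (α := ℝ)]
  exact ⟨div_nonneg (sub_pos.2 hα).le hden.le,
    (div_le_one hden).2 (by linarith [k.cast_nonneg (α := ℝ)])⟩

lemma eq_combination_fistaZ_succ (hα : 1 < α) (x : ℕ → H) (k : ℕ) :
    x (k + 1) = (1 - fistaWeight α k) • x k + fistaWeight α k • fistaZ α x (k + 1) := by
  have hα' : α - 1 ≠ 0 := (sub_pos.2 hα).ne'
  have hden : (k : ℝ) + α - 1 ≠ 0 := by linarith [k.cast_nonneg (α := ℝ)]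
  simp only [fistaZ, fistaWeight, Nat.add_sub_cancel, Nat.cast_succ]
  match_scalars <;> field_simp <;> ring

lemma IsFista.eq_combination_fistaZ (h : IsFista D ψ Φ' s α x y) (hα : 1 < α) (k : ℕ) :
    y k = (1 - fistaWeight α k) • x k + fistaWeight α k • fistaZ α x k := by
  have hα' : α - 1 ≠ 0 := (sub_pos.2 hα).ne'
  have hden : (k : ℝ) + α - 1 ≠ 0 := by linarith [k.cast_nonneg (α := ℝ)]
  rw [h.extrapolation]
  simp only [fistaZ, fistaWeight]
  match_scalars <;> field_simp
  ring

lemma sq_norm_combination_sub_combination (θ : ℝ) (a b c : H) :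
    ‖((1 - θ) • a + θ • b) - ((1 - θ) • a + θ • c)‖ ^ 2 = θ ^ 2 * ‖c - b‖ ^ 2 := by
  rw [add_sub_add_left_eq_sub, ← smul_sub, norm_smul, mul_pow, Real.norm_eq_abs, sq_abs,
    norm_sub_rev]

lemma IsFista.sub_add_sq_le (h : IsFista D ψ Φ' s α x y) (hψ : ConvexOn ℝ D ψ)
    (hΦ : ConvexOn ℝ Set.univ Φ) (hΦ' : ∀ u, HasFDerivAt Φ (innerSL ℝ (Φ' u)) u)
    (hlip : LipschitzWith L Φ') (hα : 1 < α) (hs : 0 < s) (hLs : L * s ≤ 1)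
    (hxstar : xstar ∈ D) (k : ℕ) :
    (ψ + Φ) (x (k + 1)) - (ψ + Φ) xstar +
        1 / (2 * s) * (fistaWeight α k ^ 2 * ‖fistaZ α x (k + 1) - xstar‖ ^ 2) ≤
      (1 - fistaWeight α k) * ((ψ + Φ) (x k) - (ψ + Φ) xstar) +
        1 / (2 * s) * (fistaWeight α k ^ 2 * ‖fistaZ α x k - xstar‖ ^ 2) := by
  obtain ⟨hθ₀, hθ₁⟩ := fistaWeight_mem_Icc hα k
  have hxk := h.mem k
  have hcomb : (1 - fistaWeight α k) • x k + fistaWeight α k • xstar ∈ D :=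
    hψ.1 hxk hxstar (sub_nonneg.2 hθ₁) hθ₀ (sub_add_cancel _ _)
  have hstep := forwardBackward_add_sq_le hψ hΦ hΦ' hlip hs hLs (h.isMinOn k) (h.mem (k + 1)) hcomb
  have hconvex := (hψ.add (hΦ.subset (Set.subset_univ D) hψ.1)).2 hxk hxstar
    (sub_nonneg.2 hθ₁) hθ₀ (sub_add_cancel _ _)
  have hnext : ‖(1 - fistaWeight α k) • x k + fistaWeight α k • xstar - x (k + 1)‖ ^ 2 =
      fistaWeight α k ^ 2 * ‖fistaZ α x (k + 1) - xstar‖ ^ 2 := by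
    rw [eq_combination_fistaZ_succ hα x k, sq_norm_combination_sub_combination]
  rw [h.eq_combination_fistaZ hα k, sq_norm_combination_sub_combination, hnext] at hstep
  simp only [Pi.add_apply, smul_eq_mul] at hconvex ⊢
  linarith

lemma energy_step_of_weighted_step {W W' N N' : ℝ} {k : ℕ} (hs : 0 < s) (hα : 3 ≤ α)
    (hW : 0 ≤ W)
    (h : W' + 1 / (2 * s) * (fistaWeight α k ^ 2 * N') ≤
      (1 - fistaWeight α k) * W + 1 / (2 * s) * (fistaWeight α k ^ 2 * N)) :
    2 * s / (α - 1) * (k + α - 1) ^ 2 * W' + (α - 1) * N' ≤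
      2 * s / (α - 1) * (k + α - 2) ^ 2 * W + (α - 1) * N := by
  have hk : (0 : ℝ) ≤ k := k.cast_nonneg
  have hα' : 0 < α - 1 := by linarith
  have hden : 0 < (k : ℝ) + α - 1 := by linarith
  have hcoeff : k * (k + α - 1) ≤ (k + α - 2) ^ 2 := by
    nlinarith [mul_nonneg hk (sub_nonneg.2 hα), sq_nonneg (α - 2)]
  calc 2 * s / (α - 1) * (k + α - 1) ^ 2 * W' + (α - 1) * N'
    _ = 2 * s / (α - 1) * (k + α - 1) ^ 2 *
        (W' + 1 / (2 * s) * (fistaWeight α k ^ 2 * N')) := by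
      unfold fistaWeight; field_simp
    _ ≤ 2 * s / (α - 1) * (k + α - 1) ^ 2 *
        ((1 - fistaWeight α k) * W + 1 / (2 * s) * (fistaWeight α k ^ 2 * N)) := by gcongr
    _ = 2 * s / (α - 1) * (k * (k + α - 1)) * W + (α - 1) * N := by
      unfold fistaWeight; field_simp; ring
    _ ≤ 2 * s / (α - 1) * (k + α - 2) ^ 2 * W + (α - 1) * N := by gcongr

lemma IsFista.antitone_fistaEnergy (h : IsFista D ψ Φ' s α x y) (hψ : ConvexOn ℝ D ψ)
    (hΦ : ConvexOn ℝ Set.univ Φ) (hΦ' : ∀ u, HasFDerivAt Φ (innerSL ℝ (Φ' u)) u)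
    (hlip : LipschitzWith L Φ') (hα : 3 ≤ α) (hs : 0 < s) (hLs : L * s ≤ 1)
    (hxstar : xstar ∈ D) (hmin : IsMinOn (ψ + Φ) D xstar) :
    Antitone (fistaEnergy s α (ψ + Φ) x xstar) := by
  refine antitone_nat_of_succ_le fun k ↦ ?_
  have hstep := energy_step_of_weighted_step hs hα (sub_nonneg.2 (hmin (h.mem k)))
    (h.sub_add_sq_le hψ hΦ hΦ' hlip (by linarith) hs hLs hxstar k)
  have hshift : (k : ℝ) + 1 + α - 2 = k + α - 1 := by ring
  simpa only [fistaEnergy, Nat.cast_succ, hshift] using hstep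

lemma sub_le_mul_fistaEnergy {Θ : H → ℝ} (hs : 0 < s) (hα : 2 < α) (k : ℕ) :
    Θ (x k) - Θ xstar ≤
      (α - 1) / (2 * s * ((k : ℝ) + α - 2) ^ 2) * fistaEnergy s α Θ x xstar k := by
  have hα' : 0 < α - 1 := by linarith
  have hden : 0 < (k : ℝ) + α - 2 := by linarith [k.cast_nonneg (α := ℝ)]
  calc Θ (x k) - Θ xstar
    _ = (α - 1) / (2 * s * ((k : ℝ) + α - 2) ^ 2) *
        (2 * s / (α - 1) * ((k : ℝ) + α - 2) ^ 2 * (Θ (x k) - Θ xstar)) := by field_simp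
    _ ≤ _ := by
      gcongr
      exact le_add_of_nonneg_right (by positivity)

lemma sq_norm_fistaZ_sub_le_fistaEnergy_div {Θ : H → ℝ} {k : ℕ} (hs : 0 ≤ s) (hα : 1 < α)
    (hΘ : Θ xstar ≤ Θ (x k)) :
    ‖fistaZ α x k - xstar‖ ^ 2 ≤ fistaEnergy s α Θ x xstar k / (α - 1) := by
  have hα' : 0 < α - 1 := sub_pos.2 hα
  rw [le_div_iff₀' hα']
  exact le_add_of_nonneg_left (mul_nonneg (by positivity) (sub_nonneg.2 hΘ))

lemma IsFista.sub_le_and_sq_norm_le (h : IsFista D ψ Φ' s α x y) (hψ : ConvexOn ℝ D ψ)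
    (hΦ : ConvexOn ℝ Set.univ Φ) (hΦ' : ∀ u, HasFDerivAt Φ (innerSL ℝ (Φ' u)) u)
    (hlip : LipschitzWith L Φ') (hα : 3 ≤ α) (hs : 0 < s) (hLs : L * s ≤ 1)
    (hxstar : xstar ∈ D) (hmin : IsMinOn (ψ + Φ) D xstar) (k : ℕ) :
    (ψ + Φ) (x k) - (ψ + Φ) xstar ≤
        (α - 1) / (2 * s * ((k : ℝ) + α - 2) ^ 2) * fistaEnergy s α (ψ + Φ) x xstar 0 ∧
      ‖fistaZ α x k - xstar‖ ^ 2 ≤ fistaEnergy s α (ψ + Φ) x xstar 0 / (α - 1) := by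
  have hα' : 0 < α - 1 := by linarith
  have hdecay := h.antitone_fistaEnergy hψ hΦ hΦ' hlip hα hs hLs hxstar hmin k.zero_le
  have hvalue := sub_le_mul_fistaEnergy (Θ := ψ + Φ) (x := x) (xstar := xstar) hs
    (show 2 < α by linarith) k
  have hnorm := sq_norm_fistaZ_sub_le_fistaEnergy_div hs.le (sub_pos.1 hα') (hmin (h.mem k))
  exact ⟨hvalue.trans (by gcongr), hnorm.trans (by gcongr)⟩

end Fista

section ExtendedReal

variable {H : Type*} {Ψ : H → EReal}

lemma convexOn_toReal [AddCommMonoid H] [Module ℝ H] (hbot : ∀ u, Ψ u ≠ ⊥)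
    (hΨ : ∀ u v : H, ∀ a b : ℝ, 0 ≤ a → 0 ≤ b → a + b = 1 →
      Ψ (a • u + b • v) ≤ (a : EReal) * Ψ u + (b : EReal) * Ψ v) :
    ConvexOn ℝ {u | Ψ u ≠ ⊤} fun u ↦ (Ψ u).toReal := by
  have hle : ∀ u ∈ {u | Ψ u ≠ ⊤}, ∀ v ∈ {u | Ψ u ≠ ⊤}, ∀ a b : ℝ, 0 ≤ a → 0 ≤ b → a + b = 1 →
      Ψ (a • u + b • v) ≤ ((a * (Ψ u).toReal + b * (Ψ v).toReal : ℝ) : EReal) := by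
    intro u hu v hv a b ha hb hab
    rw [EReal.coe_add, EReal.coe_mul, EReal.coe_mul, EReal.coe_toReal hu (hbot u),
      EReal.coe_toReal hv (hbot v)]
    exact hΨ u v a b ha hb hab
  refine ⟨fun u hu v hv a b ha hb hab ↦ ?_, fun u hu v hv a b ha hb hab ↦ ?_⟩
  · exact ne_top_of_le_ne_top (EReal.coe_ne_top _) (hle u hu v hv a b ha hb hab)
  · exact EReal.toReal_le_toReal (hle u hu v hv a b ha hb hab) (hbot _) (EReal.coe_ne_top _)

lemma ne_top_of_forall_add_coe_le {q : H → ℝ} {p : H} (hproper : ∃ u, Ψ u ≠ ⊤)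
    (hmin : ∀ u, Ψ p + (q p : EReal) ≤ Ψ u + (q u : EReal)) : Ψ p ≠ ⊤ := by
  obtain ⟨u, hu⟩ := hproper
  intro hp
  have htop := hmin u
  rw [hp, EReal.top_add_coe] at htop
  exact EReal.add_ne_top hu (EReal.coe_ne_top _) (top_le_iff.1 htop)

lemma isMinOn_toReal_add {q : H → ℝ} {p : H} (hbot : ∀ u, Ψ u ≠ ⊥)
    (hmin : ∀ u, Ψ p + (q p : EReal) ≤ Ψ u + (q u : EReal)) :
    IsMinOn (fun u ↦ (Ψ u).toReal + q u) {u | Ψ u ≠ ⊤} p := by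
  intro u hu
  have hp : Ψ p ≠ ⊤ := ne_top_of_forall_add_coe_le ⟨u, hu⟩ hmin
  have hle := hmin u
  rw [← EReal.coe_toReal hp (hbot p), ← EReal.coe_toReal hu (hbot u)] at hle
  exact_mod_cast hle

variable [NormedAddCommGroup H] [InnerProductSpace ℝ H]
  {Θ : H → EReal} {s α : ℝ} {x y : ℕ → H} {xstar : H} {k : ℕ}

lemma isFista_toReal {Φ' : H → H} (hbot : ∀ u, Ψ u ≠ ⊥) (hproper : ∃ u, Ψ u ≠ ⊤)
    (h0 : Ψ (x 0) ≠ ⊤)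
    (hy : ∀ k : ℕ, y k = x k + (((k : ℝ) - 1) / ((k : ℝ) + α - 1)) • (x k - x (k - 1)))
    (hx : ∀ k : ℕ, ∀ u : H,
      Ψ (x (k + 1)) + ((1 / (2 * s) * ‖x (k + 1) - (y k - s • Φ' (y k))‖ ^ 2 : ℝ) : EReal)
        ≤ Ψ u + ((1 / (2 * s) * ‖u - (y k - s • Φ' (y k))‖ ^ 2 : ℝ) : EReal)) :
    IsFista {u | Ψ u ≠ ⊤} (fun u ↦ (Ψ u).toReal) Φ' s α x y where
  mem
    | 0 => h0
    | k + 1 => ne_top_of_forall_add_coe_le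
        (q := fun u ↦ 1 / (2 * s) * ‖u - (y k - s • Φ' (y k))‖ ^ 2) hproper (hx k)
  extrapolation := hy
  isMinOn k := isMinOn_toReal_add
    (q := fun u ↦ 1 / (2 * s) * ‖u - (y k - s • Φ' (y k))‖ ^ 2) hbot (hx k)

/-- The Lyapunov function `E` of the accelerated forward-backward algorithm, for an
extended-real-valued objective `Θ`; see `fistaEnergy` for the finite-valued version. -/
noncomputable def fistaEEnergy (s α : ℝ) (Θ : H → EReal) (x : ℕ → H) (xstar : H) (k : ℕ) : EReal :=
  ((2 * s / (α - 1) * ((k : ℝ) + α - 2) ^ 2 : ℝ) : EReal) * (Θ (x k) - Θ xstar) +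
    (((α - 1) * ‖fistaZ α x k - xstar‖ ^ 2 : ℝ) : EReal)

lemma fistaEEnergy_eq_coe {θ : H → ℝ} (hk : Θ (x k) = θ (x k)) (hxstar : Θ xstar = θ xstar) :
    fistaEEnergy s α Θ x xstar k = fistaEnergy s α θ x xstar k := by
  rw [fistaEEnergy, fistaEnergy, hk, hxstar]
  norm_cast

lemma fistaEEnergy_eq_top (hs : 0 < s) (hα : 2 < α) (hk : Θ (x k) = ⊤) (hxstar : Θ xstar ≠ ⊤) :
    fistaEEnergy s α Θ x xstar k = ⊤ := by
  have hα' : 0 < α - 1 := by linarith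
  have hden : 0 < (k : ℝ) + α - 2 := by linarith [k.cast_nonneg (α := ℝ)]
  rw [fistaEEnergy, hk, EReal.top_sub hxstar, EReal.coe_mul_top_of_pos (by positivity),
    EReal.top_add_coe]

end ExtendedReal

theorem fista_value_and_z_bounds_general
    {H : Type*} [NormedAddCommGroup H] [InnerProductSpace ℝ H]
    {Ψ : H → EReal} {Φ : H → ℝ} {Φ' : H → H} {L : NNReal} {s α : ℝ}
    (hΨ_ne_bot : ∀ u, Ψ u ≠ ⊥) (hΨ_proper : ∃ u, Ψ u ≠ ⊤)
    (hΨ_convex : ∀ u v : H, ∀ a b : ℝ, 0 ≤ a → 0 ≤ b → a + b = 1 →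
      Ψ (a • u + b • v) ≤ (a : EReal) * Ψ u + (b : EReal) * Ψ v)
    (hΦ_convex : ConvexOn ℝ Set.univ Φ)
    (hΦ_diff : ∀ u, HasFDerivAt Φ (innerSL ℝ (Φ' u)) u)
    (hΦ_lip : LipschitzWith L Φ')
    (hα : 3 ≤ α) (hs : 0 < s) (hLs : L * s ≤ 1)
    {x y : ℕ → H}
    (hy : ∀ k : ℕ, y k = x k + (((k : ℝ) - 1) / ((k : ℝ) + α - 1)) • (x k - x (k - 1)))
    (hx : ∀ k : ℕ, ∀ u : H,
      Ψ (x (k + 1)) + ((1 / (2 * s) * ‖x (k + 1) - (y k - s • Φ' (y k))‖ ^ 2 : ℝ) : EReal)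
        ≤ Ψ u + ((1 / (2 * s) * ‖u - (y k - s • Φ' (y k))‖ ^ 2 : ℝ) : EReal))
    {xstar : H} (hxstar : ∀ u, Ψ xstar + (Φ xstar : EReal) ≤ Ψ u + (Φ u : EReal)) (k : ℕ) :
    (Ψ (x k) + (Φ (x k) : EReal)) - (Ψ xstar + (Φ xstar : EReal)) ≤
        (((α - 1) / (2 * s * ((k : ℝ) + α - 2) ^ 2) : ℝ) : EReal) *
          fistaEEnergy s α (fun u ↦ Ψ u + (Φ u : EReal)) x xstar 0 ∧
      ((‖fistaZ α x k - xstar‖ ^ 2 : ℝ) : EReal) ≤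
        fistaEEnergy s α (fun u ↦ Ψ u + (Φ u : EReal)) x xstar 0 / ((α - 1 : ℝ) : EReal) := by
  have hxstar_top : Ψ xstar ≠ ⊤ := ne_top_of_forall_add_coe_le hΨ_proper hxstar
  by_cases h0 : Ψ (x 0) = ⊤
  · have hα' : 0 < α - 1 := by linarith
    have hden : 0 < (k : ℝ) + α - 2 := by linarith [k.cast_nonneg (α := ℝ)]
    have hE : fistaEEnergy s α (fun u ↦ Ψ u + (Φ u : EReal)) x xstar 0 = ⊤ :=
      fistaEEnergy_eq_top hs (by linarith) (by rw [h0, EReal.top_add_coe])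
        (EReal.add_ne_top hxstar_top (EReal.coe_ne_top _))
    rw [hE, EReal.coe_mul_top_of_pos (by positivity),
      EReal.top_div_of_pos_ne_top (EReal.coe_pos.2 hα') (EReal.coe_ne_top _)]
    exact ⟨le_top, le_top⟩
  have hfista := isFista_toReal hΨ_ne_bot hΨ_proper h0 hy hx
  let ψ : H → ℝ := fun u ↦ (Ψ u).toReal
  have hcoe : ∀ u, Ψ u ≠ ⊤ → Ψ u + (Φ u : EReal) = ((ψ + Φ) u : ℝ) := fun u hu ↦ by
    rw [Pi.add_apply, EReal.coe_add, EReal.coe_toReal hu (hΨ_ne_bot u)]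
  rw [fistaEEnergy_eq_coe (hcoe _ h0) (hcoe _ hxstar_top), hcoe _ (hfista.mem k),
    hcoe _ hxstar_top, ← EReal.coe_sub, ← EReal.coe_mul, ← EReal.coe_div, EReal.coe_le_coe_iff,
    EReal.coe_le_coe_iff]
  exact hfista.sub_le_and_sq_norm_le (convexOn_toReal hΨ_ne_bot hΨ_convex) hΦ_convex hΦ_diff
    hΦ_lip hα hs hLs hxstar_top (isMinOn_toReal_add hΨ_ne_bot hxstar) k

/-- Fact 2: `Θ(x_k) - Θ(x*) ≤ (α-1)E(0)/(2s(k+α-2)²)` and `‖z_k - x*‖² ≤ E(0)/(α-1)`. -/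
theorem fista_value_and_z_bounds
    {H : Type*} [NormedAddCommGroup H] [InnerProductSpace ℝ H] [CompleteSpace H]
    (Ψ : H → EReal) (Φ : H → ℝ) (Φ' : H → H) (L s α : ℝ)
    (hΨ_ne_bot : ∀ u, Ψ u ≠ ⊥) (hΨ_proper : ∃ u, Ψ u ≠ ⊤)
    (hΨ_lsc : LowerSemicontinuous Ψ)
    (hΨ_convex : ∀ u v : H, ∀ a b : ℝ, 0 ≤ a → 0 ≤ b → a + b = 1 →
      Ψ (a • u + b • v) ≤ (a : EReal) * Ψ u + (b : EReal) * Ψ v)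
    (hΦ_convex : ConvexOn ℝ Set.univ Φ)
    (hΦ_diff : ∀ u, HasGradientAt Φ (Φ' u) u)
    (hΦ_lip : LipschitzWith (Real.toNNReal L) Φ')
    (hα : 3 ≤ α) (hs : 0 < s) (hsL : s < 1 / L)
    (x y : ℕ → H)
    (hy : ∀ k : ℕ,
      y k = x k + (((k : ℝ) - 1) / ((k : ℝ) + α - 1)) • (x k - x (k - 1)))
    (hx : ∀ k : ℕ, ∀ u : H,
      Ψ (x (k + 1)) + ((1 / (2 * s) * ‖x (k + 1) - (y k - s • Φ' (y k))‖ ^ 2 : ℝ) : EReal)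
        ≤ Ψ u + ((1 / (2 * s) * ‖u - (y k - s • Φ' (y k))‖ ^ 2 : ℝ) : EReal))
    (xstar : H)
    (hxstar : ∀ u, Ψ xstar + (Φ xstar : EReal) ≤ Ψ u + (Φ u : EReal)) :
    ∀ k : ℕ,
      ((Ψ (x k) + (Φ (x k) : EReal)) - (Ψ xstar + (Φ xstar : EReal))) ≤ (((α - 1) / (2 * s * ((k : ℝ) + α - 2) ^ 2) : ℝ) : EReal) * (((2 * s / (α - 1) * ((0 : ℝ) + α - 2) ^ 2 : ℝ) : EReal) * ((Ψ (x 0) + (Φ (x 0) : EReal)) - (Ψ xstar + (Φ xstar : EReal))) + (((α - 1) * ‖(x 0 + (((0 : ℝ) - 1) / (α - 1)) • (x 0 - x (0 - 1))) - xstar‖ ^ 2 : ℝ) : EReal)) ∧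
      ((‖(x k + (((k : ℝ) - 1) / (α - 1)) • (x k - x (k - 1))) - xstar‖ ^ 2 : ℝ) : EReal) ≤ (((2 * s / (α - 1) * ((0 : ℝ) + α - 2) ^ 2 : ℝ) : EReal) * ((Ψ (x 0) + (Φ (x 0) : EReal)) - (Ψ xstar + (Φ xstar : EReal))) + (((α - 1) * ‖(x 0 + (((0 : ℝ) - 1) / (α - 1)) • (x 0 - x (0 - 1))) - xstar‖ ^ 2 : ℝ) : EReal)) / ((α - 1 : ℝ) : EReal) := by
  have hL : 0 < L := one_div_pos.1 (hs.trans hsL)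
  simpa only [fistaEEnergy, fistaZ, Nat.cast_zero, Nat.zero_sub] using
    fista_value_and_z_bounds_general hΨ_ne_bot hΨ_proper hΨ_convex hΦ_convex
      (fun u ↦ (hΦ_diff u).hasFDerivAt) hΦ_lip hα hs
      (by rw [Real.coe_toNNReal L hL.le]; exact ((lt_div_iff₀' hL).1 hsL).le) hy hx hxstar
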